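/- arXiv:1905.03174 — 2 statements merged into one kernel-verified Lean document; each statement's English description precedes it below -/
import Mathlib

section
/- Let m, d, ν be integers with m even, m ≥ 2, ν odd, ν ≥ 2m + 1, ν² ≤ 8d + 1, 2d ≥ m(m+1), and (2m+1)(d−1) ≥ 2((2d−ν+2)(m−1) + 2d − m − m²). Then (m, d, ν) is one of (2, 3, 5), (2, 4, 5), (4, 10, 9). -/
/-!
Solving the index inequality for `d` and inserting the result into `ν² - 1 ≤ 8d` leaves a single
inequality `Q m t ≤ 0`, with `Q m` (`excessQuadratic m` below) quadratic in the excess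
`t = ν - (2m + 1) ≥ 0`. For fixed `m ≥ 2` it increases in `t ≥ 0` and `Q m 2 > 0`, so `t < 2`; as
`t` is even, `ν = 2m + 1`. Moreover `Q m 0 = 4(m - 1)(2m² - 9m + 2)` is positive for `m ≥ 5`, so
`m = 2` or `m = 4`, and the upper and lower bounds on `d` leave only the listed values.
-/

section OrderedRing

variable {R : Type*} [CommRing R]

/-- The quadratic whose non-positivity is what remains of the index inequality and Kotani's bound
once the degree is eliminated, written in terms of the excess `t = ν - (2m + 1)` of the nullity
over its minimal value. -/
def excessQuadratic (m t : R) : R :=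
  (2 * m - 1) * t ^ 2 + (8 * (m - 1) ^ 2 + 6) * t + 4 * (m - 1) * (2 * m ^ 2 - 9 * m + 2)

theorem excessQuadratic_sub_eq (m ν : R) :
    excessQuadratic m (ν - (2 * m + 1)) =
      (ν ^ 2 - 1) * (2 * m - 1) - 8 * (2 * (ν - 2) * (m - 1) + 2 * m ^ 2 - 1) := by
  unfold excessQuadratic
  ring

variable [LinearOrder R] [IsStrictOrderedRing R] {m d ν t : R}

theorem degree_mul_le_of_index_le
    (hindex : 2 * ((2 * d - ν + 2) * (m - 1) + 2 * d - m - m ^ 2) ≤ (2 * m + 1) * (d - 1)) :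
    d * (2 * m - 1) ≤ 2 * (ν - 2) * (m - 1) + 2 * m ^ 2 - 1 := by
  linarith

theorem excessQuadratic_nonpos (hm : 1 ≤ 2 * m) (hKotani : ν ^ 2 ≤ 8 * d + 1)
    (hdegree : d * (2 * m - 1) ≤ 2 * (ν - 2) * (m - 1) + 2 * m ^ 2 - 1) :
    excessQuadratic m (ν - (2 * m + 1)) ≤ 0 := by
  rw [excessQuadratic_sub_eq, sub_nonpos]
  calc (ν ^ 2 - 1) * (2 * m - 1)
      ≤ 8 * d * (2 * m - 1) :=
        mul_le_mul_of_nonneg_right (sub_le_iff_le_add.2 hKotani) (sub_nonneg.2 hm)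
    _ = 8 * (d * (2 * m - 1)) := mul_assoc _ _ _
    _ ≤ 8 * (2 * (ν - 2) * (m - 1) + 2 * m ^ 2 - 1) := by gcongr

theorem excessQuadratic_monotoneOn (hm : 1 ≤ 2 * m) :
    MonotoneOn (excessQuadratic m) (Set.Ici 0) := by
  intro s (hs : 0 ≤ s) t _ hst
  have : 0 ≤ 2 * m - 1 := sub_nonneg.2 hm
  unfold excessQuadratic
  gcongr

theorem excessQuadratic_zero_pos (hm : 5 ≤ m) : 0 < excessQuadratic m 0 := by
  have hfactor : excessQuadratic m 0 = 4 * (m - 1) * ((2 * m + 1) * (m - 5) + 7) := by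
    unfold excessQuadratic
    ring
  have : 0 < m - 1 := by linarith
  have : 0 < 2 * m + 1 := by linarith
  have : 0 ≤ m - 5 := sub_nonneg.2 hm
  rw [hfactor]
  positivity

theorem excessQuadratic_two_pos (hm : 2 ≤ m) : 0 < excessQuadratic m 2 := by
  have hexpand : excessQuadratic m 2 =
      4 * ((m - 2) * (2 * (m - 2) ^ 2 + 5 * (m - 2) + 1) + 2) := by
    unfold excessQuadratic
    ring
  have : 0 ≤ m - 2 := sub_nonneg.2 hm
  rw [hexpand]
  positivity

theorem excess_lt_two (hm : 2 ≤ m) (hQ : excessQuadratic m t ≤ 0) : t < 2 := by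
  by_contra! ht
  have hmono : excessQuadratic m 2 ≤ excessQuadratic m t :=
    excessQuadratic_monotoneOn (by linarith) zero_le_two (zero_le_two.trans ht) ht
  exact (excessQuadratic_two_pos hm).not_ge (hmono.trans hQ)

theorem lt_five_of_excessQuadratic_nonpos (ht : 0 ≤ t) (hQ : excessQuadratic m t ≤ 0) :
    m < 5 := by
  by_contra! hm
  have hmono : excessQuadratic m 0 ≤ excessQuadratic m t :=
    excessQuadratic_monotoneOn (by linarith) le_rfl ht ht
  exact (excessQuadratic_zero_pos hm).not_ge (hmono.trans hQ)

end OrderedRing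

/-- The purely computational core of the paper's proof of Theorem 2.10:
if `m` is even, `m ≥ 2`, `ν` is odd, `ν ≥ 2m+1`, `ν² ≤ 8d+1`, `2d ≥ m(m+1)`,
and `(2m+1)(d−1) ≥ 2((2d−ν+2)(m−1) + 2d − m − m²)`, then
`(m, d, ν)` is one of `(2, 3, 5)`, `(2, 4, 5)`, `(4, 10, 9)`. -/
theorem stmt_0 (m d ν : ℤ) (hm_even : Even m) (hm : 2 ≤ m)
    (hν_odd : Odd ν) (hν : 2 * m + 1 ≤ ν)
    (hKotani : ν ^ 2 ≤ 8 * d + 1)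
    (hdeg : m * (m + 1) ≤ 2 * d)
    (hmain : 2 * ((2 * d - ν + 2) * (m - 1) + 2 * d - m - m ^ 2) ≤ (2 * m + 1) * (d - 1)) :
    (m, d, ν) = (2, 3, 5) ∨ (m, d, ν) = (2, 4, 5) ∨ (m, d, ν) = (4, 10, 9) := by
  have hdegree := degree_mul_le_of_index_le hmain
  have hQ : excessQuadratic m (ν - (2 * m + 1)) ≤ 0 :=
    excessQuadratic_nonpos (by linarith) hKotani hdegree
  have hν_eq : ν = 2 * m + 1 := by
    have hexcess : ν - (2 * m + 1) < 2 := excess_lt_two hm hQ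
    obtain ⟨k, rfl⟩ := hν_odd
    omega
  have hm_lt : m < 5 := lt_five_of_excessQuadratic_nonpos (sub_nonneg.2 hν) hQ
  have hm_cases : m = 2 ∨ m = 4 := by
    obtain ⟨j, rfl⟩ := hm_even
    omega
  subst hν_eq
  rcases hm_cases with rfl | rfl
  · have hd : d = 3 ∨ d = 4 := by omega
    rcases hd with rfl | rfl <;> norm_num
  · have hd : d = 10 := by omega
    norm_num [hd]
end

section
/- Let U ⊆ ℂ be an open set containing 0, let K be a natural number, and let f : ℂ → ℂ be complex-differentiable on U \ {0}. Suppose there exists a function g : ℂ → ℂ that is C^∞ in the real sense on U (ContDiffOn ℝ ⊤ g U) and satisfies g(z) = (conj z)^K · f(z) for all z ∈ U \ {0}. Then f extends holomorphically across 0: there exists F : ℂ → ℂ complex-differentiable on U with F(z) = f(z) for all z ∈ U \ {0}. -/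
/-!
The operator `∂̄` lowers the power of `conj (z - c)` in `conj (z - c) ^ K • f z`, up to the factor
`K`, because it annihilates the holomorphic function `f`; it also costs one real derivative.
Applying it `K` times to a `C^K` extension of `conj (z - c) ^ K • f z` thus produces a continuous
extension of `f`, which is holomorphic by Riemann's removable singularity theorem.
-/

open Complex ComplexConjugate Topology

section Dbar

variable {E : Type*} [NormedAddCommGroup E] [NormedSpace ℂ E]

/-- The Wirtinger derivative `∂f/∂z̄ = (∂f/∂x + i ∂f/∂y) / 2` of a vector-valued function of a
complex variable, with `0` as junk value where `f` is not real-differentiable. -/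
noncomputable def dbar (f : ℂ → E) (z : ℂ) : E :=
  (2 : ℂ)⁻¹ • (fderiv ℝ f z 1 + I • fderiv ℝ f z I)

theorem dbar_congr_of_eventuallyEq {f g : ℂ → E} {z : ℂ} (h : f =ᶠ[𝓝 z] g) :
    dbar f z = dbar g z := by
  simp only [dbar, h.fderiv_eq]

theorem dbar_eq_zero_of_differentiableAt {f : ℂ → E} {z : ℂ} (hf : DifferentiableAt ℂ f z) :
    dbar f z = 0 := by
  have cauchyRiemann : fderiv ℝ f z I = I • fderiv ℝ f z 1 :=
    (differentiableAt_complex_iff_differentiableAt_real.mp hf).2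
  simp [dbar, cauchyRiemann, smul_smul]

theorem dbar_smul {φ : ℂ → ℂ} {f : ℂ → E} {z : ℂ} (hφ : DifferentiableAt ℝ φ z)
    (hf : DifferentiableAt ℝ f z) :
    dbar (fun w ↦ φ w • f w) z = dbar φ z • f z + φ z • dbar f z := by
  simp only [dbar, fderiv_fun_smul hφ hf, add_apply, smul_apply,
    ContinuousLinearMap.smulRight_apply, smul_eq_mul]
  module

theorem hasFDerivAt_conj_sub (c z : ℂ) :
    HasFDerivAt (fun w ↦ conj (w - c)) (conjCLE : ℂ →L[ℝ] ℂ) z :=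
  conjCLE.hasFDerivAt.comp z ((hasFDerivAt_id z).sub_const c)

theorem dbar_conj_sub_pow_succ (c : ℂ) (n : ℕ) (z : ℂ) :
    dbar (fun w ↦ conj (w - c) ^ (n + 1)) z = (n + 1) * conj (z - c) ^ n := by
  have fderiv_apply (v : ℂ) : fderiv ℝ (fun w ↦ conj (w - c) ^ (n + 1)) z v =
      (n + 1) * conj (z - c) ^ n * conj v := by
    rw [((hasFDerivAt_conj_sub c z).pow (n + 1)).fderiv]
    simp
  simp only [dbar, fderiv_apply, map_one, conj_I, smul_eq_mul]
  linear_combination (-(n + 1) * conj (z - c) ^ n / 2) * I_mul_I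

theorem dbar_conj_sub_pow_succ_smul {f : ℂ → E} {z : ℂ} (hf : DifferentiableAt ℂ f z) (c : ℂ)
    (n : ℕ) :
    dbar (fun w ↦ conj (w - c) ^ (n + 1) • f w) z = ((n + 1 : ℂ) * conj (z - c) ^ n) • f z := by
  rw [dbar_smul ((hasFDerivAt_conj_sub c z).pow (n + 1)).differentiableAt (hf.restrictScalars ℝ),
    dbar_conj_sub_pow_succ, dbar_eq_zero_of_differentiableAt hf, smul_zero, add_zero]

theorem contDiffOn_dbar {f : ℂ → E} {U : Set ℂ} {m n : WithTop ℕ∞} (hf : ContDiffOn ℝ n f U)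
    (hU : IsOpen U) (hmn : m + 1 ≤ n) : ContDiffOn ℝ m (dbar f) U := by
  have contDiffOn_fderiv_apply (v : ℂ) : ContDiffOn ℝ m (fun z ↦ fderiv ℝ f z v) U :=
    (hf.fderiv_of_isOpen hU hmn).clm_apply contDiffOn_const
  exact ((contDiffOn_fderiv_apply 1).add ((contDiffOn_fderiv_apply I).const_smul I)).const_smul _

end Dbar

theorem stmt_14_general {E : Type*} [NormedAddCommGroup E] [NormedSpace ℂ E] [CompleteSpace E]
    {U : Set ℂ} (hU : IsOpen U) {c : ℂ} (hc : c ∈ U) (K : ℕ) {f : ℂ → E}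
    (hf : DifferentiableOn ℂ f (U \ {c})) {g : ℂ → E} (hg : ContDiffOn ℝ K g U)
    (hgf : ∀ z ∈ U \ {c}, g z = conj (z - c) ^ K • f z) :
    ∃ F : ℂ → E, DifferentiableOn ℂ F U ∧ ∀ z ∈ U \ {c}, F z = f z := by
  induction K generalizing g with
  | zero =>
    have g_eq_f : ∀ z ∈ U \ {c}, g z = f z := by simpa using hgf
    have g_continuousAt : ContinuousAt g c := hg.continuousOn.continuousAt (hU.mem_nhds hc)
    exact ⟨g, (differentiableOn_compl_singleton_and_continuousAt_iff (hU.mem_nhds hc)).mp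
      ⟨hf.congr g_eq_f, g_continuousAt⟩, g_eq_f⟩
  | succ K ih =>
    have dbar_g_contDiffOn : ContDiffOn ℝ K (dbar g) U := contDiffOn_dbar hg hU (by simp)
    refine ih (g := fun z ↦ (K + 1 : ℂ)⁻¹ • dbar g z) (dbar_g_contDiffOn.const_smul _) ?_
    intro z hz
    have punctured_mem_nhds : U \ {c} ∈ 𝓝 z := (hU.sdiff isClosed_singleton).mem_nhds hz
    have dbar_g : dbar g z = ((K + 1 : ℂ) * conj (z - c) ^ K) • f z :=
      (dbar_congr_of_eventuallyEq (Filter.eventuallyEq_of_mem punctured_mem_nhds hgf)).trans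
        (dbar_conj_sub_pow_succ_smul (hf.differentiableAt punctured_mem_nhds) c K)
    rw [dbar_g, smul_smul, inv_mul_cancel_left₀ (Nat.cast_add_one_ne_zero K)]

/-- Local content of Section 4.4 of the paper: if `f` is holomorphic on a
punctured neighbourhood of `0` and `z ↦ (conj z)^K * f z` extends to a real-smooth
function on the full neighbourhood, then `f` extends holomorphically across `0`. -/
theorem stmt_14 (U : Set ℂ) (hU : IsOpen U) (h0 : (0 : ℂ) ∈ U) (K : ℕ)
    (f : ℂ → ℂ) (hf : DifferentiableOn ℂ f (U \ {0}))
    (g : ℂ → ℂ) (hg : ContDiffOn ℝ (⊤ : ℕ∞) g U)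
    (hgf : ∀ z ∈ U \ {0}, g z = (starRingEnd ℂ z) ^ K * f z) :
    ∃ F : ℂ → ℂ, DifferentiableOn ℂ F U ∧ ∀ z ∈ U \ {0}, F z = f z :=
  stmt_14_general hU h0 K hf (hg.of_le (mod_cast le_top)) (by simpa using hgf)
end
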